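/- Let T > 0, let m ≥ 1 be an integer, let 0 < t_1 < t_2 < … < t_m ≤ T and let c_1, …, c_m be nonzero reals, and define the pure-jump (piecewise constant) path Z(t) := Σ_{k=1}^m c_k · 1_{t ≥ t_k}. Then RV^n_T(Z) → Σ_{k=1}^m c_k² and R_n(Z) → 1 as n → ∞ (equivalently, ρ_n(Z) → 0). In particular, the path of a pure-jump function with at least one jump on (0, T] is not rough. -/

import Mathlib

open Filter

noncomputable section

/-- Extension of `Z : ℝ → ℝ` by the conventions `Z t := Z 0` for `t < 0` and
`Z t := Z T` for `t > T`. -/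
def Zext (T : ℝ) (Z : ℝ → ℝ) (t : ℝ) : ℝ :=
  if t < 0 then Z 0 else if T < t then Z T else Z t

/-- Realized variance `RV^n_T(Z) = Σ_{i=1}^n (Z(iT/n) − Z((i−1)T/n))²`. -/
def RV (T : ℝ) (Z : ℝ → ℝ) (n : ℕ) : ℝ :=
  ∑ i ∈ Finset.Icc 1 n,
    (Zext T Z ((i : ℝ) * T / (n : ℝ)) - Zext T Z (((i : ℝ) - 1) * T / (n : ℝ))) ^ 2

/-- Coarse realized variance
`RV^{n,2}_T(Z) = (1/2) Σ_{i=0}^n (Z((i+1)T/n) − Z((i−1)T/n))²`. -/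
def RV2 (T : ℝ) (Z : ℝ → ℝ) (n : ℕ) : ℝ :=
  (1 / 2) * ∑ i ∈ Finset.range (n + 1),
    (Zext T Z (((i : ℝ) + 1) * T / (n : ℝ)) - Zext T Z (((i : ℝ) - 1) * T / (n : ℝ))) ^ 2

/-- The first-order autocovariance sum
`Σ_{i=1}^{n−1} (Z((i+1)T/n) − Z(iT/n))·(Z(iT/n) − Z((i−1)T/n))`. -/
def crossSum (T : ℝ) (Z : ℝ → ℝ) (n : ℕ) : ℝ :=
  ∑ i ∈ Finset.Icc 1 (n - 1),
    (Zext T Z (((i : ℝ) + 1) * T / (n : ℝ)) - Zext T Z ((i : ℝ) * T / (n : ℝ))) *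
      (Zext T Z ((i : ℝ) * T / (n : ℝ)) - Zext T Z (((i : ℝ) - 1) * T / (n : ℝ)))

/-- Variance ratio `R_n(Z) = RV^{n,2}_T(Z)/RV^n_T(Z)`, with the convention `0/0 := 2`
(note that `RV^n_T(Z) = 0` forces `RV^{n,2}_T(Z) = 0`). -/
def Rratio (T : ℝ) (Z : ℝ → ℝ) (n : ℕ) : ℝ :=
  if RV T Z n = 0 then 2 else RV2 T Z n / RV T Z n

/-- First-order sample autocorrelation `ρ_n(Z)` with the convention `0/0 := 1`
(note that `RV^n_T(Z) = 0` forces the numerator to vanish). -/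
def acf (T : ℝ) (Z : ℝ → ℝ) (n : ℕ) : ℝ :=
  if RV T Z n = 0 then 1 else crossSum T Z n / RV T Z n

/-- A real sequence `a` converges *subsequentially* to `l` if every subsequence has a
further subsequence converging to `l`. -/
def SubseqTendsto (a : ℕ → ℝ) (l : ℝ) : Prop :=
  ∀ φ : ℕ → ℕ, StrictMono φ →
    ∃ ψ : ℕ → ℕ, StrictMono ψ ∧ Tendsto (a ∘ φ ∘ ψ) atTop (nhds l)

/-- `Z` is rough (Definition 1): there exists `τ < 1` such that the variance ratio `R_n(Z)`
converges subsequentially to `τ`. -/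
def IsRough (T : ℝ) (Z : ℝ → ℝ) : Prop :=
  ∃ τ : ℝ, τ < 1 ∧ SubseqTendsto (fun n => Rratio T Z n) τ

/-! Expanding the squares in `RV2` and using that the extended path is constant outside `[0, T]`
gives `RV2 = RV + crossSum`, hence `R_n = 1 + ρ_n` for every path. For a pure-jump path, as soon as
twice the mesh `T / n` is at most the distance between any two jump times, each grid cell holds at
most one jump and two adjacent cells never both hold one. From then on every squared increment is
`0` or a single `c_k²`, and every product of consecutive increments vanishes, so that
`RV = ∑ c_k²` and `crossSum = 0` hold exactly. -/

lemma SubseqTendsto.eq_of_tendsto {a : ℕ → ℝ} {l l' : ℝ} (h : SubseqTendsto a l)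
    (h' : Tendsto a atTop (nhds l')) : l = l' := by
  obtain ⟨ψ, hψ, hl⟩ := h id strictMono_id
  exact tendsto_nhds_unique hl (h'.comp hψ.tendsto_atTop)

lemma sum_range_succ_add_sq {R : Type*} [CommSemiring R] {d : ℕ → R} {n : ℕ}
    (h_zero : d 0 = 0) (h_last : d (n + 1) = 0) :
    ∑ i ∈ Finset.range (n + 1), (d (i + 1) + d i) ^ 2 =
      2 * (∑ i ∈ Finset.Icc 1 n, d i ^ 2 + ∑ i ∈ Finset.Icc 1 (n - 1), d (i + 1) * d i) := by
  have h_sq : ∑ i ∈ Finset.Icc 1 n, d i ^ 2 = ∑ i ∈ Finset.range (n + 1), d i ^ 2 := by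
    rw [Finset.range_eq_Ico, Finset.sum_eq_sum_Ico_succ_bot n.succ_pos, h_zero]
    simp [Finset.Ico_add_one_right_eq_Icc]
  have h_sq_succ : ∑ i ∈ Finset.Icc 1 n, d i ^ 2 = ∑ i ∈ Finset.range (n + 1), d (i + 1) ^ 2 := by
    rw [h_sq, Finset.sum_range_succ', Finset.sum_range_succ, h_zero, h_last]
  have h_mul : ∑ i ∈ Finset.Icc 1 (n - 1), d (i + 1) * d i =
      ∑ i ∈ Finset.range (n + 1), d (i + 1) * d i := by
    refine Finset.sum_subset (fun i hi => ?_) fun i hi hi' => ?_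
    · simp only [Finset.mem_Icc, Finset.mem_range] at hi ⊢
      omega
    · obtain rfl | rfl : i = 0 ∨ i = n := by
        simp only [Finset.mem_Icc, Finset.mem_range] at hi hi'
        omega
      · rw [h_zero, mul_zero]
      · rw [h_last, zero_mul]
  have h_expand : ∑ i ∈ Finset.range (n + 1), (d (i + 1) + d i) ^ 2 =
      ∑ i ∈ Finset.range (n + 1), d (i + 1) ^ 2 + ∑ i ∈ Finset.range (n + 1), d i ^ 2 +
        2 * ∑ i ∈ Finset.range (n + 1), d (i + 1) * d i := by
    rw [Finset.mul_sum, ← Finset.sum_add_distrib, ← Finset.sum_add_distrib]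
    exact Finset.sum_congr rfl fun i _ => by ring
  rw [h_expand, ← h_sq, ← h_sq_succ, ← h_mul]
  ring

lemma sq_sum_of_subsingleton {κ R : Type*} [Semiring R] {s : Finset κ}
    (hs : (s : Set κ).Subsingleton) (f : κ → R) :
    (∑ k ∈ s, f k) ^ 2 = ∑ k ∈ s, f k ^ 2 := by
  obtain h | ⟨k, h⟩ := hs.eq_empty_or_singleton
  · simp [Finset.coe_eq_empty.1 h]
  · simp [Finset.coe_eq_singleton.1 h]

lemma eventually_pairwise_le_dist {κ α X : Type*} [Finite κ] [MetricSpace X] {x : κ → X}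
    (hx : Function.Injective x) {l : Filter α} {ε : α → ℝ} (hε : Tendsto ε l (nhds 0)) :
    ∀ᶠ a in l, Pairwise fun j k => ε a ≤ dist (x j) (x k) := by
  simp only [Pairwise, eventually_all]
  exact fun j k hjk => hε.eventually_le_const (dist_pos.2 (hx.ne hjk))

/-- The increment `Z(iT/n) − Z((i−1)T/n)` of the extended path over the `i`-th cell of the grid with
`n` cells, in terms of which the three variation sums are expressed. The indices `i = 0` and
`i = n + 1` stand for the cells adjacent to `[0, T]`. -/
def gridIncrement (T : ℝ) (Z : ℝ → ℝ) (n i : ℕ) : ℝ :=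
  Zext T Z ((i : ℝ) * T / (n : ℝ)) - Zext T Z (((i : ℝ) - 1) * T / (n : ℝ))

section VariationSums

variable {T : ℝ} {Z : ℝ → ℝ}

lemma Zext_of_nonpos (hT : 0 ≤ T) {s : ℝ} (hs : s ≤ 0) : Zext T Z s = Z 0 := by
  rcases hs.lt_or_eq with hs | rfl
  · exact if_pos hs
  · simp [Zext, hT.not_gt]

lemma Zext_of_ge (hT : 0 ≤ T) {s : ℝ} (hs : T ≤ s) : Zext T Z s = Z T := by
  rcases hs.lt_or_eq with hs | rfl
  · simp [Zext, hs, (hT.trans hs.le).not_gt]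
  · simp [Zext, hT.not_gt]

lemma gridIncrement_succ (n i : ℕ) :
    gridIncrement T Z n (i + 1) =
      Zext T Z (((i : ℝ) + 1) * T / (n : ℝ)) - Zext T Z ((i : ℝ) * T / (n : ℝ)) := by
  simp [gridIncrement]

lemma gridIncrement_zero (hT : 0 ≤ T) (n : ℕ) : gridIncrement T Z n 0 = 0 := by
  have h_neg : ((0 : ℕ) - 1 : ℝ) * T / n ≤ 0 :=
    div_nonpos_of_nonpos_of_nonneg (by simpa using hT) n.cast_nonneg
  rw [gridIncrement, Zext_of_nonpos hT h_neg, Zext_of_nonpos hT (by simp), sub_self]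

lemma gridIncrement_succ_self (hT : 0 ≤ T) (n : ℕ) : gridIncrement T Z n (n + 1) = 0 := by
  rw [gridIncrement_succ]
  rcases n.eq_zero_or_pos with rfl | hn
  · simp
  · have hn : (0 : ℝ) < n := Nat.cast_pos.2 hn
    rw [Zext_of_ge hT ((le_div_iff₀ hn).2 (by nlinarith)),
      Zext_of_ge hT (mul_div_cancel_left₀ T hn.ne').ge, sub_self]

lemma RV_eq_sum_gridIncrement_sq (n : ℕ) :
    RV T Z n = ∑ i ∈ Finset.Icc 1 n, gridIncrement T Z n i ^ 2 := rfl

lemma RV2_eq_sum_gridIncrement_add_sq (n : ℕ) :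
    RV2 T Z n = (1 / 2) * ∑ i ∈ Finset.range (n + 1),
      (gridIncrement T Z n (i + 1) + gridIncrement T Z n i) ^ 2 := by
  simp_rw [gridIncrement_succ, gridIncrement, sub_add_sub_cancel, RV2]

lemma crossSum_eq_sum_gridIncrement_mul (n : ℕ) :
    crossSum T Z n = ∑ i ∈ Finset.Icc 1 (n - 1),
      gridIncrement T Z n (i + 1) * gridIncrement T Z n i := by
  simp_rw [gridIncrement_succ, gridIncrement, crossSum]

lemma RV2_eq_RV_add_crossSum (hT : 0 ≤ T) (n : ℕ) : RV2 T Z n = RV T Z n + crossSum T Z n := by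
  rw [RV2_eq_sum_gridIncrement_add_sq, RV_eq_sum_gridIncrement_sq,
    crossSum_eq_sum_gridIncrement_mul,
    sum_range_succ_add_sq (gridIncrement_zero hT n) (gridIncrement_succ_self hT n)]
  ring

lemma Rratio_eq_one_add_acf (hT : 0 ≤ T) (n : ℕ) : Rratio T Z n = 1 + acf T Z n := by
  unfold Rratio acf
  split_ifs with h
  · norm_num
  · rw [RV2_eq_RV_add_crossSum hT, add_div, div_self h]

lemma tendsto_Rratio_one_of_tendsto_acf_zero (hT : 0 ≤ T)
    (h : Tendsto (fun n => acf T Z n) atTop (nhds 0)) :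
    Tendsto (fun n => Rratio T Z n) atTop (nhds 1) := by
  simpa only [Rratio_eq_one_add_acf hT, add_zero] using h.const_add 1

lemma not_isRough_of_tendsto_Rratio_one (h : Tendsto (fun n => Rratio T Z n) atTop (nhds 1)) :
    ¬ IsRough T Z := by
  rintro ⟨τ, hτ, h_sub⟩
  exact hτ.ne (h_sub.eq_of_tendsto h)

end VariationSums

/-- The `i`-th cell `((i−1)T/n, iT/n]` of the grid with `n` cells on `(0, T]`. It is left-open and
right-closed because a right-continuous path jumping at `s` has that jump in its increment over
`(a, b]` exactly when `s ∈ (a, b]`. -/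
abbrev gridCell (T : ℝ) (n i : ℕ) : Set ℝ :=
  Set.Ioc (((i : ℝ) - 1) * T / (n : ℝ)) ((i : ℝ) * T / (n : ℝ))

section GridCells

variable {T x y : ℝ} {n i : ℕ}

lemma mem_gridCell_iff_ceil_eq (hT : 0 < T) (hn : 0 < n) (hi : i ≠ 0) :
    x ∈ gridCell T n i ↔ ⌈x * n / T⌉₊ = i := by
  have hn : (0 : ℝ) < n := Nat.cast_pos.2 hn
  rw [Nat.ceil_eq_iff hi, Nat.cast_pred (Nat.pos_of_ne_zero hi), lt_div_iff₀ hT, div_le_iff₀ hT,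
    ← div_lt_iff₀ hn, ← le_div_iff₀ hn, Set.mem_Ioc]

lemma ceil_mem_Icc_of_mem_Ioc (hT : 0 < T) (hn : 0 < n) (hx : x ∈ Set.Ioc 0 T) :
    ⌈x * n / T⌉₊ ∈ Finset.Icc 1 n := by
  have hn : (0 : ℝ) < n := Nat.cast_pos.2 hn
  rw [Finset.mem_Icc, Nat.one_le_ceil_iff, Nat.ceil_le, div_le_iff₀ hT, mul_comm x]
  exact ⟨div_pos (mul_pos hn hx.1) hT, mul_le_mul_of_nonneg_left hx.2 hn.le⟩

lemma sum_sum_gridCell {ι M : Type*} [Fintype ι] [AddCommMonoid M] {t : ι → ℝ} (hT : 0 < T)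
    (hn : 0 < n) (ht : ∀ k, t k ∈ Set.Ioc 0 T) (f : ι → M) :
    ∑ i ∈ Finset.Icc 1 n, ∑ k with t k ∈ gridCell T n i, f k = ∑ k, f k := by
  rw [← Finset.sum_fiberwise_of_maps_to fun k _ => ceil_mem_Icc_of_mem_Ioc hT hn (ht k)]
  refine Finset.sum_congr rfl fun i hi => ?_
  have hi : i ≠ 0 := Nat.one_le_iff_ne_zero.1 (Finset.mem_Icc.1 hi).1
  simp only [mem_gridCell_iff_ceil_eq hT hn hi]

lemma dist_lt_of_mem_gridCell (hx : x ∈ gridCell T n i) (hy : y ∈ gridCell T n i) :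
    dist x y < T / n := by
  have h_width : (i : ℝ) * T / n - ((i : ℝ) - 1) * T / n = T / n := by ring
  rw [Real.dist_eq, abs_sub_lt_iff]
  constructor <;> linarith [hx.1, hx.2, hy.1, hy.2]

lemma dist_lt_of_mem_gridCell_succ (hx : x ∈ gridCell T n (i + 1)) (hy : y ∈ gridCell T n i) :
    dist x y < 2 * T / n := by
  have hx' : x ∈ Set.Ioc ((i : ℝ) * T / n) (((i : ℝ) + 1) * T / n) := by simpa using hx
  have h_width : ((i : ℝ) + 1) * T / n - ((i : ℝ) - 1) * T / n = 2 * T / n := by ring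
  rw [Real.dist_eq, abs_of_pos (sub_pos.2 (hy.2.trans_lt hx'.1))]
  linarith [hx'.2, hy.1]

lemma disjoint_gridCell_succ : Disjoint (gridCell T n (i + 1)) (gridCell T n i) := by
  rw [disjoint_comm]
  simp [gridCell]

end GridCells

/-- The pure-jump path with a jump of size `c k` at time `t k` for each `k`; it is
right-continuous. -/
def jumpPath {ι : Type*} [Fintype ι] (t c : ι → ℝ) (s : ℝ) : ℝ :=
  ∑ k, if t k ≤ s then c k else 0

section JumpPath

variable {ι : Type*} [Fintype ι] {t c : ι → ℝ} {T : ℝ} {n : ℕ}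

lemma jumpPath_sub_jumpPath {a b : ℝ} (hab : a ≤ b) :
    jumpPath t c b - jumpPath t c a = ∑ k with t k ∈ Set.Ioc a b, c k := by
  rw [jumpPath, jumpPath, ← Finset.sum_sub_distrib, Finset.sum_filter]
  refine Finset.sum_congr rfl fun k _ => ?_
  by_cases ha : t k ≤ a
  · simp [ha, ha.trans hab]
  · simp [ha, not_le.1 ha]

lemma Zext_jumpPath (ht : ∀ k, t k ∈ Set.Ioc 0 T) : Zext T (jumpPath t c) = jumpPath t c := by
  funext s
  unfold Zext
  split_ifs with h_neg h_gt
  · refine Finset.sum_congr rfl fun k _ => ?_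
    rw [if_neg (ht k).1.not_ge, if_neg (h_neg.trans (ht k).1).not_ge]
  · refine Finset.sum_congr rfl fun k _ => ?_
    rw [if_pos (ht k).2, if_pos ((ht k).2.trans h_gt.le)]
  · rfl

lemma gridIncrement_jumpPath (hT : 0 ≤ T) (ht : ∀ k, t k ∈ Set.Ioc 0 T) (n i : ℕ) :
    gridIncrement T (jumpPath t c) n i = ∑ k with t k ∈ gridCell T n i, c k := by
  rw [gridIncrement, Zext_jumpPath ht]
  refine jumpPath_sub_jumpPath ?_
  gcongr
  exact sub_le_self _ zero_le_one

lemma RV_jumpPath_eq_sum_sq (hT : 0 < T) (hn : 0 < n) (ht : ∀ k, t k ∈ Set.Ioc 0 T)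
    (h_sep : Pairwise fun j k => T / n ≤ dist (t j) (t k)) :
    RV T (jumpPath t c) n = ∑ k, c k ^ 2 := by
  rw [RV_eq_sum_gridIncrement_sq, ← sum_sum_gridCell hT hn ht]
  refine Finset.sum_congr rfl fun i _ => ?_
  rw [gridIncrement_jumpPath hT.le ht]
  refine sq_sum_of_subsingleton (fun j hj k hk => ?_) c
  simp only [Finset.mem_coe, Finset.mem_filter_univ] at hj hk
  by_contra hjk
  exact (dist_lt_of_mem_gridCell hj hk).not_ge (h_sep hjk)

lemma crossSum_jumpPath_eq_zero (hT : 0 ≤ T) (ht : ∀ k, t k ∈ Set.Ioc 0 T)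
    (h_sep : Pairwise fun j k => 2 * T / n ≤ dist (t j) (t k)) :
    crossSum T (jumpPath t c) n = 0 := by
  rw [crossSum_eq_sum_gridIncrement_mul]
  refine Finset.sum_eq_zero fun i _ => ?_
  rw [gridIncrement_jumpPath hT ht, gridIncrement_jumpPath hT ht, Finset.sum_mul_sum]
  refine Finset.sum_eq_zero fun j hj => Finset.sum_eq_zero fun k hk => ?_
  replace hj := Finset.mem_filter_univ j |>.1 hj
  replace hk := Finset.mem_filter_univ k |>.1 hk
  have hjk : j ≠ k := by
    rintro rfl
    exact Set.disjoint_left.1 disjoint_gridCell_succ hj hk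
  exact absurd (h_sep hjk) (dist_lt_of_mem_gridCell_succ hj hk).not_ge

lemma eventually_RV_jumpPath_eq_sum_sq (hT : 0 < T) (ht : ∀ k, t k ∈ Set.Ioc 0 T)
    (ht_inj : Function.Injective t) : ∀ᶠ n in atTop, RV T (jumpPath t c) n = ∑ k, c k ^ 2 := by
  filter_upwards [eventually_gt_atTop 0,
    eventually_pairwise_le_dist ht_inj (tendsto_const_div_atTop_nhds_zero_nat T)] with n hn h_sep
  exact RV_jumpPath_eq_sum_sq hT hn ht h_sep

lemma eventually_crossSum_jumpPath_eq_zero (hT : 0 ≤ T) (ht : ∀ k, t k ∈ Set.Ioc 0 T)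
    (ht_inj : Function.Injective t) : ∀ᶠ n in atTop, crossSum T (jumpPath t c) n = 0 := by
  filter_upwards [eventually_pairwise_le_dist ht_inj
    (tendsto_const_div_atTop_nhds_zero_nat (2 * T))] with n h_sep
  exact crossSum_jumpPath_eq_zero hT ht h_sep

lemma tendsto_acf_jumpPath (hT : 0 < T) (ht : ∀ k, t k ∈ Set.Ioc 0 T)
    (ht_inj : Function.Injective t) (hc : ∃ k, c k ≠ 0) :
    Tendsto (fun n => acf T (jumpPath t c) n) atTop (nhds 0) := by
  have h_pos : 0 < ∑ k, c k ^ 2 := by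
    obtain ⟨k, hk⟩ := hc
    exact Finset.sum_pos' (fun j _ => sq_nonneg (c j)) ⟨k, Finset.mem_univ k, sq_pos_of_ne_zero hk⟩
  refine tendsto_const_nhds.congr' ?_
  filter_upwards [eventually_RV_jumpPath_eq_sum_sq (c := c) hT ht ht_inj,
    eventually_crossSum_jumpPath_eq_zero (c := c) hT.le ht ht_inj] with n h_RV h_cross
  rw [acf, h_RV, if_neg h_pos.ne', h_cross, zero_div]

theorem stmt4_general (ht : ∀ k, t k ∈ Set.Ioc 0 T) (ht_inj : Function.Injective t)
    (hc : ∃ k, c k ≠ 0) :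
    Tendsto (fun n => RV T (jumpPath t c) n) atTop (nhds (∑ k, c k ^ 2)) ∧
    Tendsto (fun n => Rratio T (jumpPath t c) n) atTop (nhds 1) ∧
    Tendsto (fun n => acf T (jumpPath t c) n) atTop (nhds 0) ∧
    ¬ IsRough T (jumpPath t c) := by
  have hT : 0 < T := hc.elim fun k _ => (ht k).1.trans_le (ht k).2
  have h_RV := tendsto_const_nhds.congr' <|
    (eventually_RV_jumpPath_eq_sum_sq (c := c) hT ht ht_inj).mono fun _ h => h.symm
  have h_acf := tendsto_acf_jumpPath hT ht ht_inj hc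
  have h_ratio := tendsto_Rratio_one_of_tendsto_acf_zero hT.le h_acf
  exact ⟨h_RV, h_ratio, h_acf, not_isRough_of_tendsto_Rratio_one h_ratio⟩

end JumpPath

/-- for a pure-jump (piecewise constant) path
`Z(t) = Σ_{k=1}^m c_k · 1_{t ≥ t_k}` with jump times `0 < t_1 < ⋯ < t_m ≤ T` and nonzero
jump sizes `c_k`, one has `RV^n_T(Z) → Σ_k c_k²`, `R_n(Z) → 1` (equivalently `ρ_n(Z) → 0`);
in particular such a path is not rough. -/
theorem stmt4 (T : ℝ) (hT : 0 < T) (m : ℕ) (hm : 1 ≤ m)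
    (t : Fin m → ℝ) (c : Fin m → ℝ)
    (ht0 : ∀ k, 0 < t k) (htT : ∀ k, t k ≤ T) (htmono : StrictMono t)
    (hc : ∀ k, c k ≠ 0)
    (Z : ℝ → ℝ) (hZ : Z = fun s => ∑ k : Fin m, if t k ≤ s then c k else 0) :
    Tendsto (fun n : ℕ => RV T Z n) atTop (nhds (∑ k : Fin m, (c k) ^ 2)) ∧
    Tendsto (fun n : ℕ => Rratio T Z n) atTop (nhds 1) ∧
    Tendsto (fun n : ℕ => acf T Z n) atTop (nhds 0) ∧
    ¬ IsRough T Z := by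
  subst hZ
  exact stmt4_general (fun k => ⟨ht0 k, htT k⟩) htmono.injective ⟨⟨0, hm⟩, hc _⟩

end
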